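/- There exists a universal constant c > 0 such that the following holds. Let p > r ≥ 1 be integers and μ > 0 with μ r ≤ p/8. Let U, V, L, R ∈ O_{p,r} all be μ-incoherent, and denote by u = Uᵀe₁, v = Vᵀe₁, l = Lᵀe₁, ρ = Rᵀe₁ ∈ ℝʳ their first rows. Then r − ⟨UᵀL, VᵀR⟩ ≥ c·(p/(μ r³))·(uᵀv − lᵀρ)², where ⟨A,B⟩ = Tr(A Bᵀ) is the Frobenius inner product. -/

import Mathlib

open Matrix
open scoped BigOperators RealInnerProductSpace

noncomputable def frobNorm {m n : Type*} [Fintype m] [Fintype n] (M : Matrix m n ℝ) : ℝ :=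
  Real.sqrt (∑ i, ∑ j, (M i j) ^ 2)

noncomputable def frobInner {m n : Type*} [Fintype m] [Fintype n] (A B : Matrix m n ℝ) : ℝ :=
  ∑ i, ∑ j, A i j * B i j

noncomputable def maxNorm {m n : Type*} [Fintype m] [Fintype n] (M : Matrix m n ℝ) : ℝ :=
  ⨆ i, ⨆ j, |M i j|

noncomputable def l0Norm {m n : Type*} (M : Matrix m n ℝ) : ℕ :=
  Set.ncard {ij : m × n | M ij.1 ij.2 ≠ 0}

noncomputable def specNorm {p q : ℕ} (M : Matrix (Fin p) (Fin q) ℝ) : ℝ :=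
  ‖LinearMap.toContinuousLinearMap (Matrix.toEuclideanLin M)‖

def Incoherent {p r : ℕ} (μ : ℝ) (U : Matrix (Fin p) (Fin r) ℝ) : Prop :=
  ∀ i, Real.sqrt (∑ j, (U i j) ^ 2) ≤ Real.sqrt (μ * r / p)

def SepProp (p r : ℕ) (μ c : ℝ) : Prop :=
  ∀ (U V L R : Matrix (Fin p) (Fin r) ℝ) (S Lam : Matrix (Fin r) (Fin r) ℝ),
    Uᵀ * U = 1 → Vᵀ * V = 1 → Lᵀ * L = 1 → Rᵀ * R = 1 →
    Incoherent μ U → Incoherent μ V → Incoherent μ L → Incoherent μ R →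
    S.IsDiag → (∀ i, 0 ≤ S i i) → Lam.IsDiag → (∀ i, 0 ≤ Lam i i) →
    maxNorm (U * S * Vᵀ - L * Lam * Rᵀ) ^ 2 ≤
      (c * μ * (r : ℝ) ^ 4 / p) * frobNorm (U * S * Vᵀ - L * Lam * Rᵀ) ^ 2

noncomputable def l1Norm {m n : Type*} [Fintype m] [Fintype n] (M : Matrix m n ℝ) : ℝ :=
  ∑ i, ∑ j, |M i j|

noncomputable def nuclearNorm {p q : ℕ} (M : Matrix (Fin p) (Fin q) ℝ) : ℝ :=
  sSup {x : ℝ | ∃ X : Matrix (Fin p) (Fin q) ℝ, specNorm X ≤ 1 ∧ x = frobInner M X}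

noncomputable def Phi {p : ℕ} (lam : ℝ) (Δ : Matrix (Fin p) (Fin p) ℝ) : ℝ :=
  sInf {x : ℝ | ∃ L S : Matrix (Fin p) (Fin p) ℝ, L + S = Δ ∧ x = nuclearNorm L + lam * l1Norm S}

/-!
Write `D = U * Vᵀ - L * Rᵀ`. Orthonormality of the columns gives `‖D‖² = 2 (r - ⟪UᵀL, VᵀR⟫)` in
Frobenius norm, and the quantity to be bounded is an entry of `D`. Compressing `D` by
`P = 1 - L * Lᵀ` on the left and `Q = 1 - V * Vᵀ` on the right kills both of its terms, so `D` is
orthogonal to the range of `X ↦ P * X * Q`. Hence `D i j` is the inner product of `D` with the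
component of the matrix unit `E i j` orthogonal to that range, whose squared norm
`1 - P i i * Q j j` is at most `‖L i‖² + ‖V j‖²`. Cauchy–Schwarz and incoherence conclude.
-/

section FrobInner

variable {l m n k : Type*} [Fintype l] [Fintype m] [Fintype n] [Fintype k]

lemma frobInner_eq_trace (A B : Matrix m n ℝ) : frobInner A B = (Aᵀ * B).trace := by
  rw [← vec_dotProduct_vec, dotProduct, Fintype.sum_prod_type_right]
  rfl

lemma frobInner_comm (A B : Matrix m n ℝ) : frobInner A B = frobInner B A := by
  simp only [frobInner, mul_comm]

lemma frobInner_sub_left (A B C : Matrix m n ℝ) :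
    frobInner (A - B) C = frobInner A C - frobInner B C := by
  simp only [frobInner_eq_trace, transpose_sub, Matrix.sub_mul, trace_sub]

lemma frobInner_sub_right (A B C : Matrix m n ℝ) :
    frobInner A (B - C) = frobInner A B - frobInner A C := by
  simp only [frobInner_eq_trace, Matrix.mul_sub, trace_sub]

lemma frobInner_self_nonneg (A : Matrix m n ℝ) : 0 ≤ frobInner A A :=
  Finset.sum_nonneg fun _ _ => Finset.sum_nonneg fun _ _ => mul_self_nonneg _

lemma frobInner_sq_le (A B : Matrix m n ℝ) :
    frobInner A B ^ 2 ≤ frobInner A A * frobInner B B := by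
  simp only [frobInner, ← Fintype.sum_prod_type', ← sq]
  exact Finset.sum_mul_sq_le_sq_mul_sq _ _ _

lemma frobInner_mul_left (A : Matrix m l ℝ) (X : Matrix l n ℝ) (Y : Matrix m n ℝ) :
    frobInner (A * X) Y = frobInner X (Aᵀ * Y) := by
  simp only [frobInner_eq_trace, transpose_mul, Matrix.mul_assoc]

lemma frobInner_mul_right (X : Matrix m l ℝ) (B : Matrix l n ℝ) (Y : Matrix m n ℝ) :
    frobInner (X * B) Y = frobInner X (Y * Bᵀ) := by
  rw [frobInner_eq_trace, transpose_mul, Matrix.mul_assoc, trace_mul_comm, Matrix.mul_assoc,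
    ← frobInner_eq_trace]

lemma frobInner_single_one [DecidableEq m] [DecidableEq n] (X : Matrix m n ℝ) (i : m) (j : n) :
    frobInner X (single i j 1) = X i j := by
  rw [frobInner_eq_trace, trace_mul_single, transpose_apply, MulOpposite.op_one, one_smul]

lemma frobInner_transpose_mul_transpose_mul (U : Matrix m k ℝ) (L : Matrix m l ℝ)
    (V : Matrix n k ℝ) (R : Matrix n l ℝ) :
    frobInner (Uᵀ * L) (Vᵀ * R) = frobInner (U * Vᵀ) (L * Rᵀ) := by
  rw [frobInner_mul_left, transpose_transpose, ← Matrix.mul_assoc, frobInner_comm,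
    frobInner_mul_right]

lemma frobInner_one_one [DecidableEq n] :
    frobInner (1 : Matrix n n ℝ) 1 = Fintype.card n := by
  rw [frobInner_eq_trace, transpose_one, Matrix.one_mul, trace_one]

lemma frobInner_mul_transpose_sub_self [DecidableEq k] {U L : Matrix m k ℝ} {V R : Matrix n k ℝ}
    (hU : Uᵀ * U = 1) (hV : Vᵀ * V = 1) (hL : Lᵀ * L = 1) (hR : Rᵀ * R = 1) :
    frobInner (U * Vᵀ - L * Rᵀ) (U * Vᵀ - L * Rᵀ) =
      2 * (Fintype.card k - frobInner (Uᵀ * L) (Vᵀ * R)) := by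
  rw [frobInner_sub_left, frobInner_sub_right, frobInner_sub_right,
    frobInner_comm (L * Rᵀ) (U * Vᵀ)]
  simp only [← frobInner_transpose_mul_transpose_mul, hU, hV, hL, hR, frobInner_one_one]
  ring

end FrobInner

section Projection

variable {l m n k : Type*} [Fintype l] [Fintype m] [Fintype n] [Fintype k] [DecidableEq k]

lemma isStarProjection_mul_transpose {U : Matrix m k ℝ} (hU : Uᵀ * U = 1) :
    IsStarProjection (U * Uᵀ) where
  isIdempotentElem := by
    rw [IsIdempotentElem, Matrix.mul_assoc, ← Matrix.mul_assoc Uᵀ, hU, Matrix.one_mul]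
  isSelfAdjoint := by
    rw [IsSelfAdjoint, star_eq_conjTranspose, conjTranspose_eq_transpose_of_trivial,
      transpose_mul, transpose_transpose]

lemma sq_apply_le_of_mul_mul_eq_zero {P : Matrix m m ℝ} {Q : Matrix n n ℝ} {X : Matrix m n ℝ}
    (hP : IsStarProjection P) (hQ : IsStarProjection Q) (hX : P * X * Q = 0) (i : m) (j : n) :
    X i j ^ 2 ≤ (1 - P i i * Q j j) * frobInner X X := by
  classical
  set E : Matrix m n ℝ := single i j 1 with hE
  set N : Matrix m n ℝ := E - P * E * Q with hN
  have frobInner_N (Y : Matrix m n ℝ) : frobInner Y N = Y i j - (P * Y * Q) i j := by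
    have hPt : Pᵀ = P := hP.isSelfAdjoint
    have hQt : Qᵀ = Q := hQ.isSelfAdjoint
    rw [hN, frobInner_sub_right, hE, frobInner_single_one, ← frobInner_single_one (P * Y * Q),
      frobInner_mul_right, frobInner_mul_left, hPt, hQt, Matrix.mul_assoc]
  have compress_N : P * N * Q = 0 := calc
    P * N * Q = P * E * Q - (P * P) * E * (Q * Q) := by
      simp only [hN, Matrix.mul_sub, Matrix.sub_mul, Matrix.mul_assoc]
    _ = 0 := by rw [hP.isIdempotentElem.eq, hQ.isIdempotentElem.eq, sub_self]
  have N_apply : N i j = 1 - P i i * Q j j := by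
    simp [hN, hE, Matrix.mul_apply, single_apply, ite_and]
  calc X i j ^ 2 = frobInner X N ^ 2 := by rw [frobInner_N, hX, Matrix.zero_apply, sub_zero]
    _ ≤ frobInner X X * frobInner N N := frobInner_sq_le X N
    _ = (1 - P i i * Q j j) * frobInner X X := by
      rw [frobInner_N, compress_N, Matrix.zero_apply, sub_zero, N_apply, mul_comm]

lemma compl_mul_sub_mul_compl_eq_zero [DecidableEq l] [DecidableEq m] [DecidableEq n]
    (U : Matrix m k ℝ) {L : Matrix m l ℝ} {V : Matrix n k ℝ} (R : Matrix n l ℝ) (hV : Vᵀ * V = 1)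
    (hL : Lᵀ * L = 1) :
    (1 - L * Lᵀ) * (U * Vᵀ - L * Rᵀ) * (1 - V * Vᵀ) = 0 := by
  have hLL : (1 - L * Lᵀ) * L = 0 := by
    rw [Matrix.sub_mul, Matrix.mul_assoc, hL, Matrix.one_mul, Matrix.mul_one, sub_self]
  have hVV : Vᵀ * (1 - V * Vᵀ) = 0 := by
    rw [Matrix.mul_sub, ← Matrix.mul_assoc, hV, Matrix.one_mul, Matrix.mul_one, sub_self]
  rw [Matrix.mul_sub _ (U * Vᵀ), ← Matrix.mul_assoc _ L, hLL, Matrix.zero_mul, sub_zero,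
    Matrix.mul_assoc, Matrix.mul_assoc U, hVV, Matrix.mul_zero, Matrix.mul_zero]

lemma sq_dotProduct_sub_dotProduct_le {U L : Matrix m k ℝ} {V R : Matrix n k ℝ}
    (hU : Uᵀ * U = 1) (hV : Vᵀ * V = 1) (hL : Lᵀ * L = 1) (hR : Rᵀ * R = 1) (i : m) (j : n) :
    (U i ⬝ᵥ V j - L i ⬝ᵥ R j) ^ 2 ≤
      2 * (L i ⬝ᵥ L i + V j ⬝ᵥ V j) * (Fintype.card k - frobInner (Uᵀ * L) (Vᵀ * R)) := by
  classical
  set D := U * Vᵀ - L * Rᵀ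
  have hD : D i j ^ 2 ≤ (1 - (1 - L i ⬝ᵥ L i) * (1 - V j ⬝ᵥ V j)) * frobInner D D := by
    have h := sq_apply_le_of_mul_mul_eq_zero (isStarProjection_mul_transpose hL).one_sub
      (isStarProjection_mul_transpose hV).one_sub (compl_mul_sub_mul_compl_eq_zero U R hV hL) i j
    rwa [Matrix.sub_apply 1, Matrix.sub_apply 1, one_apply_eq, one_apply_eq] at h
  have hLV : 0 ≤ (L i ⬝ᵥ L i) * (V j ⬝ᵥ V j) :=
    mul_nonneg (dotProduct_self_star_nonneg _) (dotProduct_self_star_nonneg _)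
  calc (U i ⬝ᵥ V j - L i ⬝ᵥ R j) ^ 2
      ≤ (1 - (1 - L i ⬝ᵥ L i) * (1 - V j ⬝ᵥ V j)) * frobInner D D := hD
    _ ≤ (L i ⬝ᵥ L i + V j ⬝ᵥ V j) * frobInner D D :=
      mul_le_mul_of_nonneg_right (by linarith) (frobInner_self_nonneg D)
    _ = _ := by rw [frobInner_mul_transpose_sub_self hU hV hL hR]; ring

end Projection

lemma Incoherent.dotProduct_self_le {p r : ℕ} {μ : ℝ} (hμ : 0 ≤ μ) {U : Matrix (Fin p) (Fin r) ℝ}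
    (hU : Incoherent μ U) (i : Fin p) : U i ⬝ᵥ U i ≤ μ * r / p := by
  simpa only [dotProduct, ← sq] using (Real.sqrt_le_sqrt_iff (by positivity)).1 (hU i)

theorem stmt9_general {p r : ℕ} (hr : 0 < r) {μ : ℝ} (hμ : 0 < μ)
    {U V L R : Matrix (Fin p) (Fin r) ℝ}
    (hU : Uᵀ * U = 1) (hV : Vᵀ * V = 1) (hL : Lᵀ * L = 1) (hR : Rᵀ * R = 1)
    (hVμ : Incoherent μ V) (hLμ : Incoherent μ L) (i j : Fin p) :
    1 / 4 * (p / (μ * r)) * (U i ⬝ᵥ V j - L i ⬝ᵥ R j) ^ 2 ≤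
      r - frobInner (Uᵀ * L) (Vᵀ * R) := by
  have hp : 0 < p := i.pos
  set G := (r : ℝ) - frobInner (Uᵀ * L) (Vᵀ * R)
  have hG₀ : 0 ≤ G := by
    have h := frobInner_self_nonneg (U * Vᵀ - L * Rᵀ)
    rw [frobInner_mul_transpose_sub_self hU hV hL hR, Fintype.card_fin] at h
    linarith
  have hLV : L i ⬝ᵥ L i + V j ⬝ᵥ V j ≤ μ * r / p + μ * r / p :=
    add_le_add (hLμ.dotProduct_self_le hμ.le i) (hVμ.dotProduct_self_le hμ.le j)
  have hsq : (U i ⬝ᵥ V j - L i ⬝ᵥ R j) ^ 2 ≤ 2 * (L i ⬝ᵥ L i + V j ⬝ᵥ V j) * G := by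
    simpa only [Fintype.card_fin] using sq_dotProduct_sub_dotProduct_le hU hV hL hR i j
  calc 1 / 4 * (p / (μ * r)) * (U i ⬝ᵥ V j - L i ⬝ᵥ R j) ^ 2
      ≤ 1 / 4 * (p / (μ * r)) * (2 * (μ * r / p + μ * r / p) * G) := by
        gcongr
        exact hsq.trans (by gcongr)
    _ = G := by field_simp; norm_num

/-- there is a universal constant c > 0 with
r − ⟨UᵀL, VᵀR⟩ ≥ c·(p/(μr³))·(uᵀv − lᵀρ)² for μ-incoherent U, V, L, R,
where u, v, l, ρ are the first rows. -/
theorem stmt9 :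
    ∃ c : ℝ, 0 < c ∧
      ∀ (p r : ℕ) (hr : 0 < r) (hrp : r < p)
        (μ : ℝ), 0 < μ → μ * (r : ℝ) ≤ (p : ℝ) / 8 →
        ∀ (U V L R : Matrix (Fin p) (Fin r) ℝ),
          Uᵀ * U = 1 → Vᵀ * V = 1 → Lᵀ * L = 1 → Rᵀ * R = 1 →
          Incoherent μ U → Incoherent μ V → Incoherent μ L → Incoherent μ R →
          (r : ℝ) - frobInner (Uᵀ * L) (Vᵀ * R) ≥
            c * ((p : ℝ) / (μ * (r : ℝ) ^ 3)) *
              ((∑ j, U ⟨0, hr.trans hrp⟩ j * V ⟨0, hr.trans hrp⟩ j) -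
                (∑ j, L ⟨0, hr.trans hrp⟩ j * R ⟨0, hr.trans hrp⟩ j)) ^ 2 := by
  refine ⟨1 / 4, by norm_num, fun p r hr hrp μ hμ _ U V L R hU hV hL hR _ hVμ hLμ _ => ?_⟩
  refine le_trans ?_ (stmt9_general hr hμ hU hV hL hR hVμ hLμ ⟨0, hr.trans hrp⟩ ⟨0, hr.trans hrp⟩)
  simp only [dotProduct]
  gcongr
  exact le_self_pow₀ (by exact_mod_cast hr) (by norm_num)
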